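/- Let 0 < q ≤ 1, η > 0, θ ≥ 0, τ ≥ 0 and fix s > 0. Then for every k ≥ 1 and every n ≥ k, Σ_{j=0}^{k} [k choose j]_q q^{(k−j)(k−j−1)/2} p_{n−j}(x_k(s); s) = (−1)^{n−k} q^{−k(n−k)} Π_{j=0}^{k−1} A_j(x_k(s), s)/a_j. -/

import Mathlib

/-- `[n]_q = 1 + q + ⋯ + q^{n-1}`. -/
noncomputable def qnum (q : ℝ) (n : ℕ) : ℝ := ∑ i ∈ Finset.range n, q ^ i

/-- `[n]_q! = [1]_q [2]_q ⋯ [n]_q`. -/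
noncomputable def qfact (q : ℝ) (n : ℕ) : ℝ := ∏ i ∈ Finset.range n, qnum q (i + 1)

/-- q-binomial coefficient `[n choose k]_q`, with the convention that it is `0` for `k > n`. -/
noncomputable def qbinom (q : ℝ) (n k : ℕ) : ℝ :=
  if k ≤ n then qfact q n / (qfact q (n - k) * qfact q k) else 0

/-- `a_n = η⁻¹ + θ[n]_q + [n]_q² ητ`. -/
noncomputable def aCoef (η θ τ q : ℝ) (n : ℕ) : ℝ :=
  η⁻¹ + θ * qnum q n + (qnum q n) ^ 2 * η * τ

/-- `b_n(t) = (tη + θ + ([n]_q + [n-1]_q)ητ)[n]_q`. -/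
noncomputable def bCoef (η θ τ q t : ℝ) (n : ℕ) : ℝ :=
  (t * η + θ + (qnum q n + qnum q (n - 1)) * η * τ) * qnum q n

/-- `c_n(t) = η(t + τ[n-1]_q)[n]_q`. -/
noncomputable def cCoef (η τ q t : ℝ) (n : ℕ) : ℝ :=
  η * (t + τ * qnum q (n - 1)) * qnum q n

/-- `A_n(x,s) = a_n + q^n x - sη q^n [n]_q`. -/
noncomputable def ACoef (η θ τ q x s : ℝ) (n : ℕ) : ℝ :=
  aCoef η θ τ q n + q ^ n * x - s * η * q ^ n * qnum q n

/-- `x_k(s) = ((sη q^k - θ)[k]_q - η⁻¹ - ητ[k]_q²)/q^k`, the zero of `x ↦ A_k(x,s)`. -/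
noncomputable def xPt (η θ τ q s : ℝ) (k : ℕ) : ℝ :=
  ((s * η * q ^ k - θ) * qnum q k - η⁻¹ - η * τ * (qnum q k) ^ 2) / q ^ k

lemma qnum_zero' (q : ℝ) : qnum q 0 = 0 := by simp [qnum]

lemma qnum_succ' (q : ℝ) (n : ℕ) : qnum q (n + 1) = qnum q n + q ^ n := by
  simp [qnum, Finset.sum_range_succ]

lemma qnum_add' (q : ℝ) (m k : ℕ) : qnum q (m + k) = qnum q m + q ^ m * qnum q k := by
  induction k with
  | zero => simp [qnum_zero']
  | succ k ih => rw [← add_assoc, qnum_succ', qnum_succ', ih, pow_add]; ring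

lemma qnum_nonneg' {q : ℝ} (hq : 0 < q) (n : ℕ) : 0 ≤ qnum q n :=
  Finset.sum_nonneg fun _ _ => (pow_pos hq _).le

lemma qnum_pos' {q : ℝ} (hq : 0 < q) (n : ℕ) : 0 < qnum q (n + 1) := by
  rw [qnum_succ']
  have := qnum_nonneg' hq n
  positivity

lemma qfact_succ' (q : ℝ) (n : ℕ) : qfact q (n + 1) = qfact q n * qnum q (n + 1) := by
  simp [qfact, Finset.prod_range_succ]

lemma qfact_pos' {q : ℝ} (hq : 0 < q) (n : ℕ) : 0 < qfact q n :=
  Finset.prod_pos fun i _ => qnum_pos' hq i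

lemma qbinom_zero_right' {q : ℝ} (hq : 0 < q) (n : ℕ) : qbinom q n 0 = 1 := by
  have := (qfact_pos' hq n).ne'
  have h0 : qfact q 0 = 1 := by simp [qfact]
  simp [qbinom, h0, this]

lemma qbinom_self' {q : ℝ} (hq : 0 < q) (n : ℕ) : qbinom q n n = 1 := by
  have := (qfact_pos' hq n).ne'
  have h0 : qfact q 0 = 1 := by simp [qfact]
  simp [qbinom, h0, this]

lemma qbinom_gt' (q : ℝ) (n : ℕ) : qbinom q n (n + 1) = 0 := by
  simp [qbinom]

lemma qbinom_pascal' {q : ℝ} (hq : 0 < q) (i d : ℕ) :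
    qbinom q (i + d + 1 + 1) (i + 1) =
      q ^ (i + 1) * qbinom q (i + d + 1) (i + 1) + qbinom q (i + d + 1) i := by
  have e1 : i + d + 1 + 1 - (i + 1) = d + 1 := by omega
  have e2 : i + d + 1 - (i + 1) = d := by omega
  have e3 : i + d + 1 - i = d + 1 := by omega
  unfold qbinom
  rw [if_pos (by omega), if_pos (by omega), if_pos (by omega), e1, e2, e3,
    qfact_succ' q (i + d + 1), qfact_succ' q d, qfact_succ' q i]
  have h1 := (qfact_pos' hq i).ne'
  have h2 := (qfact_pos' hq d).ne'
  have h3 := (qnum_pos' hq i).ne'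
  have h4 := (qnum_pos' hq d).ne'
  have h5 : qnum q (i + d + 1 + 1) = qnum q (i + 1) + q ^ (i + 1) * qnum q (d + 1) := by
    rw [← qnum_add']; congr 1; omega
  rw [h5]
  field_simp
  ring

lemma tri' (d : ℕ) : (d + 1) * (d + 1 - 1) / 2 = d + d * (d - 1) / 2 := by
  rcases d with _ | d
  · simp
  · have : (d + 1 + 1) * (d + 1 + 1 - 1) = (d + 1) * (d + 1 - 1) + 2 * (d + 1) := by
      simp only [Nat.add_sub_cancel]; ring
    rw [this, Nat.add_mul_div_left _ _ (by norm_num)]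
    omega

/-- the alternating-free q-binomial sum of a sequence -/
noncomputable def SS (q : ℝ) (f : ℕ → ℝ) (k n : ℕ) : ℝ :=
  ∑ j ∈ Finset.range (k + 1), qbinom q k j * q ^ ((k - j) * (k - j - 1) / 2) * f (n - j)

lemma SS_zero {q : ℝ} (hq : 0 < q) (f : ℕ → ℝ) (n : ℕ) : SS q f 0 n = f n := by
  simp [SS, qbinom_zero_right' hq]

lemma SS_succ {q : ℝ} (hq : 0 < q) (f : ℕ → ℝ) (k n : ℕ) :
    SS q f (k + 1) (n + 1) = q ^ k * SS q f k (n + 1) + SS q f k n := by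
  have e : SS q f k (n + 1) = ∑ j ∈ Finset.range (k + 1 + 1),
      qbinom q k j * q ^ ((k - j) * (k - j - 1) / 2) * f (n + 1 - j) := by
    rw [Finset.sum_range_succ, qbinom_gt']; simp [SS]
  rw [e]
  unfold SS
  rw [Finset.sum_range_succ', Finset.sum_range_succ' _ (k + 1), mul_add, Finset.mul_sum]
  have : ∀ i ∈ Finset.range (k + 1),
      qbinom q (k + 1) (i + 1) * q ^ ((k + 1 - (i + 1)) * (k + 1 - (i + 1) - 1) / 2)
        * f (n + 1 - (i + 1)) =
      q ^ k * (qbinom q k (i + 1) * q ^ ((k - (i + 1)) * (k - (i + 1) - 1) / 2)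
        * f (n + 1 - (i + 1))) + qbinom q k i * q ^ ((k - i) * (k - i - 1) / 2) * f (n - i) := by
    intro i hi
    have hi' : i ≤ k := by simpa [Nat.lt_succ_iff] using hi
    rcases hi'.eq_or_lt with rfl | hlt
    · simp [qbinom_self' hq, qbinom_gt']
    · obtain ⟨d, rfl⟩ := Nat.exists_eq_add_of_lt hlt
      have e1 : i + d + 1 + 1 - (i + 1) = d + 1 := by omega
      have e2 : i + d + 1 - (i + 1) = d := by omega
      have e3 : i + d + 1 - i = d + 1 := by omega
      have e4 : n + 1 - (i + 1) = n - i := by omega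
      rw [e1, e2, e3, e4, tri', qbinom_pascal' hq]
      rw [show i + d + 1 = (i + 1) + d by omega, pow_add, pow_add]
      ring
  rw [Finset.sum_congr rfl this, Finset.sum_add_distrib]
  simp only [qbinom_zero_right' hq, Nat.sub_zero]
  rw [tri', pow_add]
  ring

lemma aCoef_pos' {η θ τ q : ℝ} (hq0 : 0 < q) (hη : 0 < η) (hθ : 0 ≤ θ) (hτ : 0 ≤ τ) (n : ℕ) :
    0 < aCoef η θ τ q n := by
  have := qnum_nonneg' hq0 n
  unfold aCoef
  positivity

/-- middle coefficient of the recurrence of the k-th q-binomial sums -/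
noncomputable def BB (η θ τ q s : ℝ) (k m : ℕ) : ℝ :=
  s * η * qnum q (m + k) + (θ + (qnum q (m + k) + qnum q (m + k - 1)) * η * τ) * qnum q m

lemma SS_rec {η θ τ q s : ℝ} (hq0 : 0 < q) (x : ℝ) (f : ℕ → ℝ)
    (hf : ∀ n : ℕ, x * f n = aCoef η θ τ q n * f (n + 1) + bCoef η θ τ q s n * f n
        + cCoef η τ q s n * f (n - 1)) (k : ℕ) : ∀ m : ℕ,
    x * SS q f k (m + k) = aCoef η θ τ q (m + k) * SS q f k (m + 1 + k)
      + BB η θ τ q s k m * SS q f k (m + k) + cCoef η τ q s m * SS q f k (m - 1 + k) := by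
  induction k with
  | zero =>
    intro m
    simp only [SS_zero hq0, BB, add_zero]
    rw [hf m]
    unfold bCoef
    ring
  | succ k ih =>
    intro m
    have i1 := ih (m + 1)
    have i0 := ih m
    have r1 : SS q f (k + 1) (m + (k + 1)) = q ^ k * SS q f k (m + 1 + k) + SS q f k (m + k) := by
      rw [← add_assoc, SS_succ hq0, show m + k + 1 = m + 1 + k by omega]
    have r2 : SS q f (k + 1) (m + 1 + (k + 1)) =
        q ^ k * SS q f k (m + 1 + 1 + k) + SS q f k (m + 1 + k) := by
      rw [← add_assoc, SS_succ hq0, show m + 1 + k + 1 = m + 1 + 1 + k by omega]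
    have hA : q ^ k * BB η θ τ q s k (m + 1) + aCoef η θ τ q (m + k) =
        aCoef η θ τ q (m + 1 + k) + q ^ k * BB η θ τ q s (k + 1) m := by
      unfold BB aCoef
      rw [show m + (k + 1) = m + k + 1 by omega, show m + 1 + k = m + k + 1 by omega,
        Nat.add_sub_cancel, qnum_succ' q (m + k), qnum_succ' q m, pow_add]
      ring
    have hB : q ^ k * cCoef η τ q s (m + 1) + BB η θ τ q s k m =
        BB η θ τ q s (k + 1) m + q ^ k * cCoef η τ q s m := by
      unfold BB cCoef
      rw [show m + (k + 1) = m + k + 1 by omega,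
        Nat.add_sub_cancel, Nat.add_sub_cancel]
      rcases m with _ | m
      · simp only [qnum_zero', qnum_succ', zero_add, pow_zero]
        ring
      · rw [show m + 1 + k - 1 = k + m by omega, show m + 1 + k = k + m + 1 by omega,
          Nat.add_sub_cancel]
        simp only [qnum_succ', pow_succ, pow_add, qnum_add' q k m]
        have hm : qnum q m * (q - 1) = q ^ m - 1 := by
          unfold qnum; exact geom_sum_mul q m
        linear_combination (0 : ℝ) * hm
    have r0 : cCoef η τ q s m * SS q f (k + 1) (m - 1 + (k + 1)) =
        cCoef η τ q s m * (q ^ k * SS q f k (m + k) + SS q f k (m - 1 + k)) := by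
      rcases m with _ | m
      · simp [cCoef, qnum_zero']
      · simp only [Nat.add_sub_cancel]
        rw [← add_assoc, SS_succ hq0, show m + k + 1 = m + 1 + k by omega]
    rw [Nat.add_sub_cancel] at i1
    rw [r0, r1, r2, show m + (k + 1) = m + 1 + k by omega]
    linear_combination q ^ k * i1 + i0 + SS q f k (m + 1 + k) * hA + SS q f k (m + k) * hB

/-- for `0 < q ≤ 1`, `η > 0`, `θ ≥ 0`, `τ ≥ 0`, `s > 0`, every `k ≥ 1` and every
`n ≥ k`:
`∑_{j=0}^k [k choose j]_q q^{(k-j)(k-j-1)/2} p_{n-j}(x_k(s);s)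
  = (-1)^{n-k} q^{-k(n-k)} ∏_{j=0}^{k-1} A_j(x_k(s),s)/a_j`. -/
theorem stmt3 (η θ τ q s : ℝ)
    (hq0 : 0 < q) (hq1 : q ≤ 1) (hη : 0 < η) (hθ : 0 ≤ θ) (hτ : 0 ≤ τ) (hs : 0 < s)
    (p : ℕ → ℝ → ℝ)
    (hp0 : ∀ y : ℝ, p 0 y = 1)
    (hprec : ∀ (n : ℕ) (y : ℝ), y * p n y =
      aCoef η θ τ q n * p (n + 1) y + bCoef η θ τ q s n * p n y
        + cCoef η τ q s n * p (n - 1) y) :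
    ∀ k : ℕ, 1 ≤ k → ∀ n : ℕ, k ≤ n →
      ∑ j ∈ Finset.range (k + 1),
          qbinom q k j * q ^ ((k - j) * (k - j - 1) / 2) * p (n - j) (xPt η θ τ q s k)
        = (-1 : ℝ) ^ (n - k) * (q ^ (k * (n - k)))⁻¹ *
            ∏ j ∈ Finset.range k, ACoef η θ τ q (xPt η θ τ q s k) s j / aCoef η θ τ q j := by
  intro k _ n hkn
  obtain ⟨m, rfl⟩ := Nat.exists_eq_add_of_le' hkn
  rw [Nat.add_sub_cancel]
  have hxk : ACoef η θ τ q (xPt η θ τ q s k) s k = 0 := by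
    have := (pow_pos hq0 k).ne'
    unfold ACoef xPt aCoef
    rw [mul_div_cancel₀ _ this]
    ring
  generalize xPt η θ τ q s k = x at hxk ⊢
  change SS q (fun i => p i x) k (m + k) = _
  have hf := fun n => hprec n x
  set f : ℕ → ℝ := fun i => p i x with hfdef
  have hrec := SS_rec hq0 x f hf
  have ha := fun n => (aCoef_pos' (q := q) hq0 hη hθ hτ n).ne'
  have hc : cCoef η τ q s 0 = 0 := by simp [cCoef, qnum_zero']
  have hstep : ∀ k, SS q f (k + 1) (k + 1) =
      SS q f k k * (ACoef η θ τ q x s k / aCoef η θ τ q k) := by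
    intro k
    have h := hrec k 0
    rw [hc] at h
    have h1 := SS_succ hq0 f k k
    have hB : BB η θ τ q s k 0 = s * η * qnum q k := by simp [BB, qnum_zero']
    rw [hB] at h
    simp only [zero_add, add_comm 1 k, zero_mul, add_zero] at h
    rw [h1]
    have := ha k
    field_simp
    unfold ACoef
    linear_combination (-q ^ k) * h
  have hdiag : ∀ k, SS q f k k =
      ∏ j ∈ Finset.range k, ACoef η θ τ q x s j / aCoef η θ τ q j := by
    intro k
    induction k with
    | zero => simp [SS_zero hq0, hfdef, hp0]
    | succ k ih => rw [hstep, ih, Finset.prod_range_succ]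
  have hz : ∀ m, SS q f (k + 1) (m + (k + 1)) = 0 := by
    intro m
    induction m using Nat.strong_induction_on with
    | _ m ih =>
      rcases m with _ | m
      · rw [zero_add, hstep, hxk]; simp
      · have h := hrec (k + 1) m
        have hl : cCoef η τ q s m * SS q f (k + 1) (m - 1 + (k + 1)) = 0 := by
          rw [ih (m - 1) (by omega), mul_zero]
        rw [hl, ih m (by omega)] at h
        have := ha (m + (k + 1))
        simpa [this] using h
  rw [← hdiag]
  induction m with
  | zero => simp
  | succ m ih =>
    have h := hz m
    rw [← add_assoc, SS_succ hq0, ih (by omega)] at h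
    have hq := (pow_pos hq0 k).ne'
    have hq' := (pow_pos hq0 (k * m)).ne'
    rw [show m + 1 + k = m + k + 1 by omega, mul_add, mul_one, pow_add, pow_succ]
    apply mul_left_cancel₀ hq
    field_simp at h ⊢
    linear_combination h
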